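/- Let k ≥ 2 and p ≥ 2 be integers, let A ∈ ℝ^{d×d} be any real matrix, let S ∈ ℝ^{d×(k+p)} be a random matrix with i.i.d. standard Gaussian N(0,1) entries, and let ω ↦ Q(ω) ∈ ℝ^{d×(k+p)} be any measurable map such that for every outcome ω, Q(ω)ᵀQ(ω) = I_{k+p} and the column space of A·S(ω) is contained in the column space of Q(ω). Then for every matrix B ∈ ℝ^{d×d} with rank(B) ≤ k, E[‖(I − QQᵀ)A‖_F²] ≤ (1 + k/(p−1))·‖A − B‖_F². -/

import Mathlib

open MeasureTheory Matrix

/-- The Frobenius norm of a real matrix. -/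
noncomputable def frobNorm {m n : ℕ} (M : Matrix (Fin m) (Fin n) ℝ) : ℝ :=
  Real.sqrt (∑ i, ∑ j, (M i j) ^ 2)

/-- The law of a `d × n` random matrix with i.i.d. standard Gaussian entries
(as a product measure on `Fin d → Fin n → ℝ`). -/
noncomputable def gaussMeasure (d n : ℕ) : Measure (Fin d → Fin n → ℝ) :=
  Measure.pi fun _ => Measure.pi fun _ => ProbabilityTheory.gaussianReal 0 1

open ProbabilityTheory

/-- Standard Gaussian vector law on `Fin n → ℝ`. -/
noncomputable def gvec (n : ℕ) : Measure (Fin n → ℝ) :=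
  Measure.pi fun _ => gaussianReal 0 1

instance gvec_prob (n : ℕ) : IsProbabilityMeasure (gvec n) := by
  unfold gvec; infer_instance

instance gaussMeasure_prob (d n : ℕ) : IsProbabilityMeasure (gaussMeasure d n) := by
  unfold gaussMeasure; infer_instance

lemma charFunDual_gauss (L : StrongDual ℝ ℝ) :
    charFunDual (gaussianReal 0 1) L = Complex.exp ((-(L 1) ^ 2 / 2 : ℝ)) := by
  have : charFunDual (gaussianReal 0 1) L = charFun (gaussianReal 0 1) (L 1) := by
    rw [charFunDual_apply, charFun_apply]
    congr 1 with x
    have : L x = x * L 1 := by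
      conv_lhs => rw [← mul_one x, ← smul_eq_mul, map_smul, smul_eq_mul]
    simp [this, mul_comm]
  rw [this, charFun_gaussianReal]
  congr 1
  push_cast
  simp
  ring

lemma charFunDual_gvec (n : ℕ) (L : StrongDual ℝ (Fin n → ℝ)) :
    charFunDual (gvec n) L = Complex.exp ((-(∑ j, (L (Pi.single j 1)) ^ 2) / 2 : ℝ)) := by
  rw [gvec, charFunDual_pi]
  simp_rw [charFunDual_gauss, ← Complex.exp_sum]
  congr 1
  push_cast
  rw [neg_div, Finset.sum_div, ← Finset.sum_neg_distrib]
  refine Finset.sum_congr rfl fun j _ => ?_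
  simp [neg_div]

lemma charFunDual_gaussMeasure (d n : ℕ) (L : StrongDual ℝ (Fin d → Fin n → ℝ)) :
    charFunDual (gaussMeasure d n) L =
      Complex.exp ((-(∑ i, ∑ j, (L (Pi.single i (Pi.single j 1))) ^ 2) / 2 : ℝ)) := by
  rw [gaussMeasure, charFunDual_pi]
  have := charFunDual_gvec n
  unfold gvec at this
  simp_rw [this, ← Complex.exp_sum]
  congr 1
  push_cast
  rw [neg_div, Finset.sum_div, ← Finset.sum_neg_distrib]
  refine Finset.sum_congr rfl fun j _ => ?_
  simp [neg_div]

/-- Sum of squares identity for rows-orthonormal matrices. -/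
lemma sq_vecMul {m n : ℕ} (V : Matrix (Fin m) (Fin n) ℝ) (hV : V * Vᵀ = 1) (y : Fin m → ℝ) :
    ∑ j, (∑ l, V l j * y l) ^ 2 = ∑ l, y l ^ 2 := by
  have h1 : ∑ j, (∑ l, V l j * y l) ^ 2 = (y ᵥ* V) ⬝ᵥ (y ᵥ* V) := by
    simp only [dotProduct, vecMul, sq]
    simp only [mul_comm]
  have h2 : ∑ l, y l ^ 2 = y ⬝ᵥ y := by simp [dotProduct, sq]
  rw [h1, h2]
  conv_lhs => rw [← mulVec_transpose V y, dotProduct_mulVec, vecMul_transpose, mulVec_mulVec, hV]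
  simp

lemma map_gvec {m n : ℕ} (V : Matrix (Fin m) (Fin n) ℝ) (hV : V * Vᵀ = 1) :
    (gvec n).map (fun t => V *ᵥ t) = gvec m := by
  let F : (Fin n → ℝ) →L[ℝ] (Fin m → ℝ) := V.mulVecLin.toContinuousLinearMap
  change (gvec n).map F = gvec m
  have : IsProbabilityMeasure ((gvec n).map F) :=
    Measure.isProbabilityMeasure_map (by fun_prop)
  apply Measure.ext_of_charFunDual
  ext L
  rw [charFunDual_map, charFunDual_gvec, charFunDual_gvec]
  have hL : ∀ v : Fin m → ℝ, L v = ∑ l, v l * L (Pi.single l 1) := by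
    intro v
    conv_lhs => rw [pi_eq_sum_univ' v]
    simp [map_sum]
  congr 4
  refine Eq.trans ?_ (sq_vecMul V hV _)
  refine Finset.sum_congr rfl fun j _ => ?_
  congr 1
  change L (V *ᵥ Pi.single j 1) = _
  rw [hL]
  simp

lemma map_gaussMeasure {d n : ℕ} (U : Matrix (Fin d) (Fin d) ℝ) (hU : U * Uᵀ = 1) :
    (gaussMeasure d n).map (fun T : Fin d → Fin n → ℝ => (fun i j => ∑ l, U i l * T l j))
      = gaussMeasure d n := by
  let F0 : (Fin d → Fin n → ℝ) →ₗ[ℝ] (Fin d → Fin n → ℝ) :=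
    { toFun := fun T : Fin d → Fin n → ℝ => (fun i j => ∑ l, U i l * T l j)
      map_add' := by intro x y; ext i j; simp [mul_add, Finset.sum_add_distrib]
      map_smul' := by
        intro c y; ext i j
        simp only [Pi.smul_apply, smul_eq_mul, RingHom.id_apply, Finset.mul_sum]
        exact Finset.sum_congr rfl fun _ _ => by ring }
  let F : (Fin d → Fin n → ℝ) →L[ℝ] (Fin d → Fin n → ℝ) := F0.toContinuousLinearMap
  change (gaussMeasure d n).map F = gaussMeasure d n
  have : IsProbabilityMeasure ((gaussMeasure d n).map F) :=
    Measure.isProbabilityMeasure_map (by fun_prop)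
  apply Measure.ext_of_charFunDual
  ext L
  rw [charFunDual_map, charFunDual_gaussMeasure, charFunDual_gaussMeasure]
  congr 4
  have hL : ∀ v : Fin d → Fin n → ℝ,
      L v = ∑ i, ∑ j, v i j * L (Pi.single i (Pi.single j 1)) := by
    intro v
    have : v = ∑ i, ∑ j, v i j • (Pi.single i (Pi.single j 1) : Fin d → Fin n → ℝ) := by
      ext a b
      simp [Finset.sum_apply, Pi.single_apply, ite_apply]
    conv_lhs => rw [this]
    simp [map_sum]
  rw [Finset.sum_comm]
  conv_rhs => rw [Finset.sum_comm]
  refine Finset.sum_congr rfl fun j _ => ?_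
  refine Eq.trans ?_ (sq_vecMul U hU _)
  refine Finset.sum_congr rfl fun i _ => ?_
  congr 1
  change L (fun a b => ∑ l, U a l * (Pi.single i (Pi.single j 1) : Fin d → Fin n → ℝ) l b) = _
  rw [hL]
  refine Finset.sum_congr rfl fun a _ => ?_
  simp [Pi.single_apply, ite_apply]
open scoped ENNReal
lemma gauss_exp (t : ℝ) (ht : 0 < t) :
    ∫ x, Real.exp (-t * x ^ 2) ∂(gaussianReal 0 1) = (1 + 2 * t) ^ (-(1 / 2 : ℝ)) := by
  rw [integral_gaussianReal_eq_integral_smul (by norm_num)]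
  have : ∀ x : ℝ, gaussianPDFReal 0 1 x • Real.exp (-t * x ^ 2) =
      (√(2 * Real.pi))⁻¹ * Real.exp (-(1/2 + t) * x ^ 2) := by
    intro x
    simp only [gaussianPDFReal, smul_eq_mul, NNReal.coe_one, mul_one, sub_zero]
    rw [mul_assoc, ← Real.exp_add]
    congr 2
    ring
  simp_rw [this]
  rw [integral_const_mul, integral_gaussian, Real.rpow_neg (by positivity),
    ← Real.sqrt_eq_rpow, ← Real.sqrt_inv, ← Real.sqrt_inv, ← Real.sqrt_mul (by positivity)]
  congr 1
  have := Real.pi_pos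
  field_simp

lemma inv_eq_lint (a : ℝ) (ha : 0 ≤ a) :
    (ENNReal.ofReal a)⁻¹ ≤ ∫⁻ t in Set.Ioi (0 : ℝ), ENNReal.ofReal (Real.exp (-t * a)) := by
  rcases ha.eq_or_lt with rfl | ha
  · simp
  · rw [← ofReal_integral_eq_lintegral_ofReal]
    · have h1 := integral_exp_mul_Ioi (a := -a) (by linarith) 0
      have h2 : ∀ t : ℝ, -t * a = -a * t := fun t => by ring
      simp_rw [h2, h1, ← ENNReal.ofReal_inv_of_pos ha]
      apply ENNReal.ofReal_le_ofReal
      simp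
    · have := (integrableOn_exp_mul_Ioi (a := -a) (by linarith) 0)
      have h2 : ∀ t : ℝ, -t * a = -a * t := fun t => by ring
      simp_rw [h2]
      exact this
    · exact Filter.Eventually.of_forall fun t => (Real.exp_pos _).le

lemma lint_rpow (m : ℕ) (hm : 3 ≤ m) :
    ∫⁻ t in Set.Ioi (0 : ℝ), ENNReal.ofReal (((1 + 2 * t) ^ (-(1 / 2 : ℝ))) ^ m) =
      ENNReal.ofReal (1 / ((m : ℝ) - 2)) := by
  have hm' : (3 : ℝ) ≤ m := by exact_mod_cast hm
  have hd : ∀ t ∈ Set.Ici (0 : ℝ),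
      HasDerivAt (fun t : ℝ => -(1 / ((m : ℝ) - 2)) * (1 + 2 * t) ^ (1 - (m : ℝ) / 2))
        (((1 + 2 * t) ^ (-(1 / 2 : ℝ))) ^ m) t := by
    intro t ht
    have ht' : (0 : ℝ) ≤ t := ht
    have h1 : HasDerivAt (fun t : ℝ => 1 + 2 * t) 2 t := by
      simpa using ((hasDerivAt_id t).const_mul 2).const_add 1
    have h2 := (h1.rpow_const (p := 1 - (m : ℝ) / 2) (Or.inl (by positivity))).const_mul
      (-(1 / ((m : ℝ) - 2)))
    convert! h2 using 1
    rw [← Real.rpow_natCast, ← Real.rpow_mul (by positivity)]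
    have : -(1 / 2 : ℝ) * m = 1 - (m : ℝ) / 2 - 1 := by ring
    rw [this]
    have : (m : ℝ) - 2 ≠ 0 := by linarith
    field_simp
    ring
  have hpos : ∀ t ∈ Set.Ioi (0 : ℝ), 0 ≤ ((1 + 2 * t) ^ (-(1 / 2 : ℝ))) ^ m := by
    intro t ht
    have ht' : (0 : ℝ) < t := ht
    positivity
  have hlim : Filter.Tendsto
      (fun t : ℝ => -(1 / ((m : ℝ) - 2)) * (1 + 2 * t) ^ (1 - (m : ℝ) / 2))
      Filter.atTop (nhds 0) := by
    have h3 : Filter.Tendsto (fun t : ℝ => 1 + 2 * t) Filter.atTop Filter.atTop :=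
      Filter.tendsto_atTop_add_const_left _ _
        (Filter.tendsto_id.const_mul_atTop (by norm_num))
    have h4 := (tendsto_rpow_neg_atTop (y := (m : ℝ) / 2 - 1) (by linarith)).comp h3
    have h5 := h4.const_mul (-(1 / ((m : ℝ) - 2)))
    rw [mul_zero] at h5
    refine h5.congr fun t => ?_
    simp
  rw [← ofReal_integral_eq_lintegral_ofReal
    (integrableOn_Ioi_deriv_of_nonneg' hd hpos hlim)
    (ae_restrict_of_forall_mem measurableSet_Ioi hpos)]
  rw [integral_Ioi_of_hasDerivAt_of_nonneg' hd hpos hlim]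
  simp

lemma inv_chi (m : ℕ) (hm : 3 ≤ m) :
    ∫⁻ x : Fin m → ℝ, (ENNReal.ofReal (∑ i, x i ^ 2))⁻¹
      ∂(Measure.pi fun _ => gaussianReal 0 1) ≤ ENNReal.ofReal (1 / ((m : ℝ) - 2)) := by
  calc _ ≤ ∫⁻ x : Fin m → ℝ, (∫⁻ t in Set.Ioi (0 : ℝ),
          ENNReal.ofReal (Real.exp (-t * ∑ i, x i ^ 2)))
          ∂(Measure.pi fun _ => gaussianReal 0 1) :=
        lintegral_mono fun x => inv_eq_lint _ (by positivity)
    _ = ∫⁻ t in Set.Ioi (0 : ℝ), ∫⁻ x : Fin m → ℝ, 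
          ENNReal.ofReal (Real.exp (-t * ∑ i, x i ^ 2))
          ∂(Measure.pi fun _ => gaussianReal 0 1) := by
        rw [lintegral_lintegral_swap]
        apply Measurable.aemeasurable
        fun_prop
    _ = ∫⁻ t in Set.Ioi (0 : ℝ), ENNReal.ofReal (((1 + 2 * t) ^ (-(1 / 2 : ℝ))) ^ m) := by
        refine setLIntegral_congr_fun measurableSet_Ioi fun t ht => ?_
        have ht' : (0 : ℝ) < t := ht
        rw [← ofReal_integral_eq_lintegral_ofReal]
        · congr 1
          simp_rw [Finset.mul_sum, Real.exp_sum]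
          rw [integral_fintype_prod_eq_pow (fun x : ℝ => Real.exp (-t * x ^ 2)), gauss_exp t ht']
          simp
        · refine Integrable.of_bound (C := 1) (Measurable.aestronglyMeasurable (by fun_prop)) ?_
          refine Filter.Eventually.of_forall fun x => ?_
          rw [Real.norm_eq_abs, abs_of_pos (Real.exp_pos _), Real.exp_le_one_iff]
          have : 0 ≤ ∑ i, x i ^ 2 := by positivity
          nlinarith
        · exact Filter.Eventually.of_forall fun x => (Real.exp_pos _).le
    _ = _ := lint_rpow m hm

/-- second moments -/
lemma mom {ι : Type*} [Fintype ι] {Ω : ι → Type*} {mΩ : ∀ i, MeasurableSpace (Ω i)}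
    {μ : (i : ι) → Measure (Ω i)} [∀ i, IsProbabilityMeasure (μ i)]
    {X : Π i, Ω i → ℝ} (h : ∀ i, MemLp (X i) 2 (μ i)) (h0 : ∀ i, ∫ ω, X i ω ∂(μ i) = 0) :
    MemLp (fun ω => ∑ i, X i (ω i)) 2 (Measure.pi μ) ∧
    ∫ ω, (∑ i, X i (ω i)) ∂(Measure.pi μ) = 0 ∧
    ∫ ω, (∑ i, X i (ω i)) ^ 2 ∂(Measure.pi μ) = ∑ i, ∫ ω, X i ω ^ 2 ∂(μ i) := by
  have hL : ∀ i, MemLp (fun ω : Π i, Ω i => X i (ω i)) 2 (Measure.pi μ) := fun i =>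
    (h i).comp_measurePreserving (measurePreserving_eval μ i)
  have hM : MemLp (fun ω => ∑ i, X i (ω i)) 2 (Measure.pi μ) := memLp_finsetSum _ fun i _ => hL i
  have hz : ∫ ω, (∑ i, X i (ω i)) ∂(Measure.pi μ) = 0 := by
    rw [integral_finsetSum _ fun i _ => (hL i).integrable (by norm_num)]
    refine Finset.sum_eq_zero fun i _ => ?_
    rw [← h0 i, ← (measurePreserving_eval μ i).map_eq, integral_map]
    · exact (measurable_pi_apply i).aemeasurable
    · rw [(measurePreserving_eval μ i).map_eq]; exact (h i).aestronglyMeasurable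
  refine ⟨hM, hz, ?_⟩
  rw [← variance_of_integral_eq_zero hM.aemeasurable hz]
  have := variance_sum_pi h
  rw [show (∑ i, fun ω : Π i, Ω i => X i (ω i)) = fun ω => ∑ i, X i (ω i) by ext; simp] at this
  rw [this]
  exact Finset.sum_congr rfl fun i _ =>
    variance_of_integral_eq_zero (h i).aemeasurable (h0 i)

lemma mom_gauss {ι : Type*} [Fintype ι] (n : ℕ) (a : ι → ℝ) (w : Fin n → ℝ) :
    Integrable (fun y : ι → Fin n → ℝ => (∑ j, a j * ∑ c, w c * y j c) ^ 2)
      (Measure.pi fun _ => Measure.pi fun _ => gaussianReal 0 1) ∧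
    ∫ y : ι → Fin n → ℝ, (∑ j, a j * ∑ c, w c * y j c) ^ 2
      ∂(Measure.pi fun _ => Measure.pi fun _ => gaussianReal 0 1) =
      (∑ c, w c ^ 2) * ∑ j, a j ^ 2 := by
  have e0 : MemLp (fun x : ℝ => x) 2 (gaussianReal 0 1) := memLp_id_gaussianReal 2
  have e1 : ∫ x : ℝ, x ∂(gaussianReal 0 1) = 0 := by simp
  have e2 : ∫ x : ℝ, x ^ 2 ∂(gaussianReal 0 1) = 1 := by
    rw [← variance_of_integral_eq_zero e0.aemeasurable e1]
    simp
  obtain ⟨p1, p2, p3⟩ := mom (μ := fun _ : Fin n => gaussianReal 0 1)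
    (X := fun c x => w c * x) (fun c => e0.const_mul _)
    (fun c => by rw [integral_const_mul, e1, mul_zero])
  obtain ⟨q1, q2, q3⟩ := mom
    (μ := fun _ : ι => Measure.pi fun _ : Fin n => gaussianReal 0 1)
    (X := fun j y => a j * ∑ c, w c * y c) (fun c => p1.const_mul _)
    (fun c => by rw [integral_const_mul, p2, mul_zero])
  refine ⟨q1.integrable_sq, ?_⟩
  rw [q3]
  simp_rw [mul_pow] at p3 ⊢
  simp_rw [integral_const_mul, p3, integral_const_mul, e2]
  simp only [mul_one]
  rw [← Finset.sum_mul, mul_comm]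

lemma exists_V {d n m : ℕ} (x : Fin d → Fin n → ℝ) (s : Finset (Fin d)) (h : m + s.card ≤ n) :
    ∃ V : Matrix (Fin m) (Fin n) ℝ, V * Vᵀ = 1 ∧ ∀ j ∈ s, V *ᵥ x j = 0 := by
  classical
  let W : Submodule ℝ (EuclideanSpace ℝ (Fin n)) :=
    Submodule.span ℝ (↑(s.image fun j => WithLp.toLp 2 (x j)) : Set (EuclideanSpace ℝ (Fin n)))
  have h1 : Module.finrank ℝ W ≤ s.card :=
    (finrank_span_finset_le_card _).trans Finset.card_image_le
  have h2 : Module.finrank ℝ W + Module.finrank ℝ Wᗮ = n := by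
    rw [Submodule.finrank_add_finrank_orthogonal]; simp
  have h3 : m ≤ Module.finrank ℝ Wᗮ := by omega
  let b := stdOrthonormalBasis ℝ Wᗮ
  refine ⟨Matrix.of fun l c => (b (Fin.castLE h3 l) : EuclideanSpace ℝ (Fin n)) c, ?_, ?_⟩
  · ext l l'
    have := orthonormal_iff_ite.1 b.orthonormal (Fin.castLE h3 l') (Fin.castLE h3 l)
    rw [Submodule.coe_inner, PiLp.inner_apply] at this
    simp only [Matrix.mul_apply, transpose_apply, Matrix.one_apply, of_apply]
    simp only [RCLike.inner_apply, conj_trivial] at this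
    rw [this]
    simp [Fin.ext_iff, eq_comm]
  · intro j hj
    ext l
    have hb := (b (Fin.castLE h3 l)).2
    rw [Submodule.mem_orthogonal] at hb
    have := hb (WithLp.toLp 2 (x j)) (Submodule.subset_span (by
      simp only [Finset.coe_image]; exact ⟨j, hj, rfl⟩))
    rw [PiLp.inner_apply] at this
    simp only [RCLike.inner_apply, conj_trivial] at this
    simpa [mulVec, dotProduct] using this

lemma pointwise {d n : ℕ} (A R : Matrix (Fin d) (Fin d) ℝ) (T : Matrix (Fin d) (Fin n) ℝ)
    (hR : ∀ v : Fin d → ℝ, ∑ c, (R *ᵥ v) c ^ 2 ≤ ∑ c, v c ^ 2)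
    (hRA : R * A * T = 0) (K : Finset (Fin d)) (i : Fin d) (hi : i ∈ K)
    (w : Fin n → ℝ) (hw : ∀ j ∈ K.erase i, (T *ᵥ w) j = 0) :
    (T *ᵥ w) i ^ 2 * ∑ c, (R * A) c i ^ 2 ≤ ∑ c, (∑ j ∈ Kᶜ, A c j * (T *ᵥ w) j) ^ 2 := by
  set u := T *ᵥ w with hu
  have h0 : R *ᵥ (A *ᵥ u) = 0 := by
    rw [hu, mulVec_mulVec, mulVec_mulVec, hRA]; simp
  let z : Fin d → ℝ := fun c => ∑ j ∈ Kᶜ, A c j * u j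
  have hAu : A *ᵥ u = u i • (fun c => A c i) + z := by
    ext c
    simp only [mulVec, dotProduct, Pi.add_apply, Pi.smul_apply, smul_eq_mul, z]
    rw [← Finset.sum_add_sum_compl K, ← Finset.add_sum_erase K _ hi,
      Finset.sum_eq_zero (s := K.erase i) (fun j hj => by rw [hw j hj, mul_zero])]
    ring
  have h1 : ∀ c, u i * (R * A) c i = -(R *ᵥ z) c := by
    intro c
    rw [hAu, mulVec_add, mulVec_smul] at h0
    have := congrFun h0 c
    simp only [Pi.add_apply, Pi.smul_apply, smul_eq_mul, Pi.zero_apply] at this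
    have e : (R *ᵥ fun c => A c i) c = (R * A) c i := by
      simp [mulVec, dotProduct, Matrix.mul_apply]
    rw [e] at this
    linarith
  rw [Finset.mul_sum]
  calc _ = ∑ c, (R *ᵥ z) c ^ 2 := by
        refine Finset.sum_congr rfl fun c _ => ?_
        rw [← mul_pow, h1, neg_sq]
    _ ≤ _ := hR z

lemma core {d n m : ℕ} (hm : 3 ≤ m) (A : Matrix (Fin d) (Fin d) ℝ)
    (R : (Fin d → Fin n → ℝ) → Matrix (Fin d) (Fin d) ℝ)
    (hR : ∀ T, ∀ v : Fin d → ℝ, ∑ c, (R T *ᵥ v) c ^ 2 ≤ ∑ c, v c ^ 2)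
    (hRA : ∀ T, R T * A * Matrix.of T = 0) (K : Finset (Fin d)) (i : Fin d) (hi : i ∈ K)
    (hK : m + K.card ≤ n + 1)
    (hmeas : Measurable fun T => ENNReal.ofReal (∑ c, (R T * A) c i ^ 2)) :
    ∫⁻ T, ENNReal.ofReal (∑ c, (R T * A) c i ^ 2) ∂(gaussMeasure d n) ≤
      ENNReal.ofReal ((∑ c, ∑ j ∈ Kᶜ, A c j ^ 2) * (1 / ((m : ℝ) - 2))) := by
  classical
  set f := fun T => ENNReal.ofReal (∑ c, (R T * A) c i ^ 2) with hf
  set τ := ∑ c, ∑ j ∈ Kᶜ, A c j ^ 2 with hτ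
  set C := ENNReal.ofReal (τ * (1 / ((m : ℝ) - 2))) with hC
  have hτ0 : 0 ≤ τ := by positivity
  let μ : Fin d → Measure (Fin n → ℝ) := fun _ => gvec n
  have key : ∀ x, (∫⋯∫⁻_{i}, (∫⋯∫⁻_Kᶜ, f ∂μ) ∂μ) x ≤ C := by
    intro x
    obtain ⟨V, hV, hVx⟩ := exists_V (m := m) x (K.erase i) (by
      rw [Finset.card_erase_of_mem hi]
      have := Finset.card_pos.2 ⟨i, hi⟩
      omega)
    let D : (Fin n → ℝ) → ℝ := fun s => ∑ l, (V *ᵥ s) l ^ 2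
    have hDc : Continuous fun s : Fin n → ℝ => V *ᵥ s := by fun_prop
    have hDm : Measurable D := by
      refine Finset.measurable_sum _ fun l _ => Measurable.pow_const ?_ _
      exact (measurable_pi_apply l).comp hDc.measurable
    have hI : ∫⁻ s, (ENNReal.ofReal (D s))⁻¹ ∂(gvec n) ≤ ENNReal.ofReal (1 / ((m : ℝ) - 2)) := by
      refine le_trans (le_of_eq ?_) (inv_chi m hm)
      change _ = ∫⁻ x, _ ∂(gvec m)
      rw [← map_gvec V hV, lintegral_map (by fun_prop) hDc.measurable]
    have hae : ∀ᵐ s ∂(gvec n), (ENNReal.ofReal (D s))⁻¹ < ∞ :=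
      ae_lt_top (by fun_prop) (hI.trans_lt ENNReal.ofReal_lt_top).ne
    rw [lmarginal_singleton]
    change ∫⁻ s, (∫⋯∫⁻_Kᶜ, f ∂μ) (Function.update x i s) ∂(gvec n) ≤ C
    have hstep : ∀ᵐ s ∂(gvec n), (∫⋯∫⁻_Kᶜ, f ∂μ) (Function.update x i s) ≤
        ENNReal.ofReal τ * (ENNReal.ofReal (D s))⁻¹ := by
      filter_upwards [hae] with s hs
      have hDs : 0 < D s := by
        by_contra hcon
        rw [ENNReal.ofReal_eq_zero.2 (not_lt.1 hcon)] at hs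
        simp at hs
      let w : Fin n → ℝ := (V *ᵥ s) ᵥ* V
      have hww : ∑ c, w c ^ 2 = D s := by
        refine Eq.trans ?_ (sq_vecMul V hV _)
        simp [w, vecMul, dotProduct, mul_comm]
      have hdot : ∀ t : Fin n → ℝ, t ⬝ᵥ w = (V *ᵥ t) ⬝ᵥ (V *ᵥ s) := by
        intro t
        rw [dotProduct_comm, ← dotProduct_mulVec, dotProduct_comm]
      have hsw : s ⬝ᵥ w = D s := by
        rw [hdot]; simp [D, dotProduct, sq]
      have hpt : ∀ y : (Kᶜ : Finset (Fin d)) → Fin n → ℝ,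
          f (Function.updateFinset (Function.update x i s) Kᶜ y) ≤
            ENNReal.ofReal ((D s ^ 2)⁻¹ * ∑ c, (∑ j : (Kᶜ : Finset (Fin d)),
              A c j * ∑ e, w e * y j e) ^ 2) := by
        intro y
        set T := Function.updateFinset (Function.update x i s) Kᶜ y with hT
        have hTi : T i = s := by simp [hT, Function.updateFinset, hi]
        have hTK : ∀ j ∈ K.erase i, T j = x j := by
          intro j hj
          have := Finset.mem_erase.1 hj
          simp [hT, Function.updateFinset, this.1, this.2]
        have hTy : ∀ j : (Kᶜ : Finset (Fin d)), T j = y j := by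
          intro j
          simp [hT, Function.updateFinset]
        have hp := pointwise A (R T) (Matrix.of T) (hR T) (hRA T) K i hi w (by
          intro j hj
          change T j ⬝ᵥ w = 0
          rw [hTK j hj, hdot, hVx j hj, zero_dotProduct])
        have e1 : (Matrix.of T *ᵥ w) i = D s := by
          change T i ⬝ᵥ w = D s
          rw [hTi, hsw]
        rw [e1] at hp
        apply ENNReal.ofReal_le_ofReal
        rw [← div_eq_inv_mul, le_div_iff₀ (by positivity), mul_comm]
        refine hp.trans (le_of_eq ?_)
        refine Finset.sum_congr rfl fun c _ => ?_
        congr 1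
        rw [← Finset.sum_coe_sort]
        refine Finset.sum_congr rfl fun j _ => ?_
        congr 1
        change T j ⬝ᵥ w = _
        rw [hTy j]
        simp [dotProduct, mul_comm]
      refine (lintegral_mono hpt).trans (le_of_eq ?_)
      have hmg := fun c : Fin d =>
        mom_gauss (ι := (Kᶜ : Finset (Fin d))) n (fun j => A c j) w
      change ∫⁻ y : (Kᶜ : Finset (Fin d)) → Fin n → ℝ, _
        ∂(Measure.pi fun _ => Measure.pi fun _ => gaussianReal 0 1) = _
      rw [← ofReal_integral_eq_lintegral_ofReal]
      · rw [integral_const_mul, integral_finsetSum _ fun c _ => (hmg c).1]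
        simp_rw [fun c => (hmg c).2]
        rw [← Finset.mul_sum, hww, ← ENNReal.ofReal_inv_of_pos hDs, ← ENNReal.ofReal_mul hτ0]
        congr 1
        have : ∑ c, ∑ j : (Kᶜ : Finset (Fin d)), A c j ^ 2 = τ := by
          rw [hτ]
          refine Finset.sum_congr rfl fun c _ => ?_
          exact Finset.sum_coe_sort Kᶜ (fun j => A c j ^ 2)
        rw [this]
        field_simp
      · exact (integrable_finsetSum _ fun c _ => (hmg c).1).const_mul _
      · exact Filter.Eventually.of_forall fun y => by positivity
    refine (lintegral_mono_ae hstep).trans ?_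
    rw [lintegral_const_mul' _ _ ENNReal.ofReal_ne_top, hC, ENNReal.ofReal_mul hτ0]
    gcongr
  have hu : (Finset.univ : Finset (Fin d)) = K.erase i ∪ ({i} ∪ Kᶜ) := by
    ext j; simp; tauto
  change ∫⁻ T, f T ∂(Measure.pi μ) ≤ C
  rw [lintegral_eq_lmarginal_univ (μ := μ) 0, hu, lmarginal_union μ f hmeas, lmarginal_union μ f hmeas]
  · refine (lmarginal_mono (g := fun _ => C) key 0).trans ?_
    simp [lmarginal]
  · simp [hi]
  · rw [Finset.disjoint_left]
    intro j hj
    have := Finset.mem_erase.1 hj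
    simp [this.1, this.2]

lemma frob_sq {m n : ℕ} (M : Matrix (Fin m) (Fin n) ℝ) :
    frobNorm M ^ 2 = ∑ i, ∑ j, (M i j) ^ 2 := by
  rw [frobNorm, Real.sq_sqrt (by positivity)]

lemma frob_mul_U {m n : ℕ} (M : Matrix (Fin m) (Fin n) ℝ) (U : Matrix (Fin n) (Fin n) ℝ)
    (hU : U * Uᵀ = 1) :
    ∑ i, ∑ j, ((M * U) i j) ^ 2 = ∑ i, ∑ j, (M i j) ^ 2 := by
  refine Finset.sum_congr rfl fun i _ => ?_
  rw [← sq_vecMul U hU (M i)]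
  refine Finset.sum_congr rfl fun j _ => ?_
  simp [Matrix.mul_apply, mul_comm]

lemma exists_U {d : ℕ} (B : Matrix (Fin d) (Fin d) ℝ) :
    ∃ (U : Matrix (Fin d) (Fin d) ℝ) (K : Finset (Fin d)), U * Uᵀ = 1 ∧ K.card = B.rank ∧
      ∀ c, ∀ j ∈ Kᶜ, (B * U) c j = 0 := by
  classical
  have hM : (Bᵀ * B).IsHermitian := by
    have := isHermitian_conjTranspose_mul_self B
    simpa using this
  refine ⟨(hM.eigenvectorUnitary : Matrix (Fin d) (Fin d) ℝ),
    Finset.univ.filter fun j => hM.eigenvalues j ≠ 0, ?_, ?_, ?_⟩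
  · have := (Matrix.mem_unitaryGroup_iff).1 hM.eigenvectorUnitary.2
    simpa [star_eq_conjTranspose] using this
  · rw [← rank_transpose_mul_self, hM.rank_eq_card_non_zero_eigs, Fintype.card_subtype]
  · intro c j hj
    have hj' : hM.eigenvalues j = 0 := by simpa using hj
    have h1 := hM.mulVec_eigenvectorBasis j
    rw [hj', zero_smul] at h1
    set u : Fin d → ℝ := ⇑(hM.eigenvectorBasis j) with hu
    have h2 : (B *ᵥ u) ⬝ᵥ (B *ᵥ u) = 0 := by
      rw [dotProduct_mulVec, ← mulVec_transpose, mulVec_mulVec, h1, zero_dotProduct]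
    have h3 : B *ᵥ u = 0 := dotProduct_self_eq_zero.1 h2
    have := congrFun h3 c
    simpa [Matrix.mul_apply, mulVec, dotProduct, hu] using this

lemma proj_contr {d n : ℕ} (Q : Matrix (Fin d) (Fin n) ℝ) (hQ : Qᵀ * Q = 1) (v : Fin d → ℝ) :
    ∑ c, ((1 - Q * Qᵀ) *ᵥ v) c ^ 2 ≤ ∑ c, v c ^ 2 := by
  have e : ∀ u : Fin d → ℝ, ∑ c, u c ^ 2 = u ⬝ᵥ u := fun u => by simp [dotProduct, sq]
  have e' : ∀ u : Fin n → ℝ, 0 ≤ u ⬝ᵥ u := fun u => by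
    simp only [dotProduct]; exact Finset.sum_nonneg fun i _ => mul_self_nonneg _
  rw [e, e, sub_mulVec, one_mulVec, ← mulVec_mulVec]
  set y := Qᵀ *ᵥ v with hy
  have h1 : v ⬝ᵥ (Q *ᵥ y) = y ⬝ᵥ y := by
    rw [dotProduct_mulVec, ← mulVec_transpose]
  have h2 : (Q *ᵥ y) ⬝ᵥ (Q *ᵥ y) = y ⬝ᵥ y := by
    rw [dotProduct_mulVec, ← mulVec_transpose, mulVec_mulVec, hQ, one_mulVec]
  rw [sub_dotProduct, dotProduct_sub, dotProduct_sub, h1, h2, dotProduct_comm (Q *ᵥ y) v, h1]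
  linarith [e' y]

lemma proj_kill {d n r : ℕ} (Q : Matrix (Fin d) (Fin n) ℝ) (hQ : Qᵀ * Q = 1)
    (M : Matrix (Fin d) (Fin r) ℝ)
    (h : LinearMap.range M.mulVecLin ≤ LinearMap.range Q.mulVecLin) :
    (1 - Q * Qᵀ) * M = 0 := by
  ext c j
  obtain ⟨y, hy⟩ := h ⟨Pi.single j 1, rfl⟩
  simp only [mulVecLin_apply] at hy
  have : (1 - Q * Qᵀ) *ᵥ (M *ᵥ Pi.single j 1) = 0 := by
    rw [← hy, mulVec_mulVec, Matrix.sub_mul, Matrix.mul_assoc, hQ]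
    simp
  have := congrFun this c
  rw [mulVec_mulVec] at this
  simpa using this

theorem stmt17 (d k p : ℕ) (hk : 2 ≤ k) (hp : 2 ≤ p)
    (A : Matrix (Fin d) (Fin d) ℝ)
    (Q : (Fin d → Fin (k + p) → ℝ) → (Fin d → Fin (k + p) → ℝ))
    (hQmeas : Measurable Q)
    (hQorth : ∀ s, (Matrix.of (Q s))ᵀ * Matrix.of (Q s) = 1)
    (hQspan : ∀ s, LinearMap.range (A * Matrix.of s).mulVecLin ≤
      LinearMap.range (Matrix.of (Q s)).mulVecLin)
    (B : Matrix (Fin d) (Fin d) ℝ) (hB : B.rank ≤ k) :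
    (∫ s, (frobNorm ((1 - Matrix.of (Q s) * (Matrix.of (Q s))ᵀ) * A)) ^ 2
        ∂(gaussMeasure d (k + p))) ≤
      (1 + (k : ℝ) / ((p : ℝ) - 1)) * (frobNorm (A - B)) ^ 2 := by
  obtain ⟨U, K, hU, hKc, hBU⟩ := exists_U B
  have hp' : (2 : ℝ) ≤ p := by exact_mod_cast hp
  set A' := A * U with hA'
  let P : (Fin d → Fin (k + p) → ℝ) → Matrix (Fin d) (Fin d) ℝ :=
    fun s => 1 - Matrix.of (Q s) * (Matrix.of (Q s))ᵀ
  let φ : (Fin d → Fin (k + p) → ℝ) → (Fin d → Fin (k + p) → ℝ) :=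
    fun T => fun i j => ∑ l, U i l * T l j
  have hφ : Measurable φ := by
    refine measurable_pi_lambda _ fun i => measurable_pi_lambda _ fun j => ?_
    fun_prop
  have hq : ∀ i j, Measurable fun s => Q s i j := fun i j =>
    (measurable_pi_apply j).comp ((measurable_pi_apply i).comp hQmeas)
  have hPm : ∀ c j, Measurable fun s => (P s * A') c j := by
    intro c j
    simp only [P, Matrix.mul_apply, Matrix.sub_apply, transpose_apply, of_apply]
    fun_prop
  have hF : ∀ s, (frobNorm ((1 - Matrix.of (Q s) * (Matrix.of (Q s))ᵀ) * A)) ^ 2 =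
      ∑ j, ∑ c, (P s * A') c j ^ 2 := by
    intro s
    rw [frob_sq, ← frob_mul_U _ U hU, Finset.sum_comm, Matrix.mul_assoc]
  have hgm : ∀ j, Measurable fun s => ENNReal.ofReal (∑ c, (P s * A') c j ^ 2) := by
    intro j
    refine ENNReal.measurable_ofReal.comp ?_
    exact Finset.measurable_sum _ fun c _ => (hPm c j).pow_const 2
  set τ := ∑ c, ∑ j ∈ Kᶜ, A' c j ^ 2 with hτ
  have hτ0 : 0 ≤ τ := by positivity
  have hτle : τ ≤ frobNorm (A - B) ^ 2 := by
    rw [frob_sq, ← frob_mul_U _ U hU, hτ]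
    refine Finset.sum_le_sum fun c _ => ?_
    calc ∑ j ∈ Kᶜ, A' c j ^ 2 = ∑ j ∈ Kᶜ, ((A - B) * U) c j ^ 2 := by
          refine Finset.sum_congr rfl fun j hj => ?_
          rw [Matrix.sub_mul, Matrix.sub_apply, hBU c j hj, sub_zero]
      _ ≤ _ := Finset.sum_le_univ_sum_of_nonneg fun j => sq_nonneg _
  have hcontr : ∀ s j, ∑ c, (P s * A') c j ^ 2 ≤ ∑ c, A' c j ^ 2 := by
    intro s j
    have := proj_contr (Matrix.of (Q s)) (hQorth s) (fun c => A' c j)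
    refine le_trans (le_of_eq ?_) this
    refine Finset.sum_congr rfl fun c _ => ?_
    simp [P, Matrix.mul_apply, mulVec, dotProduct]
  have hcore : ∀ j ∈ K, ∫⁻ s, ENNReal.ofReal (∑ c, (P s * A') c j ^ 2)
      ∂(gaussMeasure d (k + p)) ≤ ENNReal.ofReal (τ * (1 / ((p : ℝ) - 1))) := by
    intro j hj
    conv_lhs => rw [← map_gaussMeasure (n := k + p) U hU]
    rw [lintegral_map (hgm j) hφ]
    have := core (m := p + 1) (n := k + p) (by omega) A' (fun T => P (φ T))
      (fun T v => proj_contr _ (hQorth _) v)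
      (fun T => by
        have h1 : A' * Matrix.of T = A * Matrix.of (φ T) := by
          rw [hA', Matrix.mul_assoc]
          congr 1
        rw [Matrix.mul_assoc, h1]
        exact proj_kill _ (hQorth _) _ (hQspan _))
      K j hj (by omega) ((hgm j).comp hφ)
    refine this.trans (le_of_eq ?_)
    rw [← hτ]
    congr 3
    push_cast
    ring
  have hcompl : ∀ j, ∫⁻ s, ENNReal.ofReal (∑ c, (P s * A') c j ^ 2)
      ∂(gaussMeasure d (k + p)) ≤ ENNReal.ofReal (∑ c, A' c j ^ 2) := by
    intro j
    refine (lintegral_mono fun s => ENNReal.ofReal_le_ofReal (hcontr s j)).trans ?_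
    simp
  have hcard : (K.card : ℝ) ≤ k := by rw [hKc]; exact_mod_cast hB
  have hp1 : 0 < (p : ℝ) - 1 := by linarith
  simp_rw [hF]
  rw [integral_eq_lintegral_of_nonneg_ae
    (Filter.Eventually.of_forall fun s => by simp only [Pi.zero_apply]; positivity)
    (Measurable.aestronglyMeasurable
      (Finset.measurable_sum _ fun j _ => Finset.measurable_sum _ fun c _ => (hPm c j).pow_const 2))]
  have hmain : ∫⁻ s, ENNReal.ofReal (∑ j, ∑ c, (P s * A') c j ^ 2) ∂(gaussMeasure d (k + p)) ≤
      ENNReal.ofReal (τ + K.card * (τ * (1 / ((p : ℝ) - 1)))) := by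
    have h1 : ∀ s, ENNReal.ofReal (∑ j, ∑ c, (P s * A') c j ^ 2) =
        ∑ j, ENNReal.ofReal (∑ c, (P s * A') c j ^ 2) := fun s =>
      ENNReal.ofReal_sum_of_nonneg fun j _ => by positivity
    simp_rw [h1]
    rw [lintegral_finsetSum _ fun j _ => hgm j, ← Finset.sum_add_sum_compl K, add_comm,
      ENNReal.ofReal_add hτ0 (by positivity)]
    refine add_le_add ?_ ?_
    · rw [hτ, Finset.sum_comm, ENNReal.ofReal_sum_of_nonneg fun j _ => by positivity]
      exact Finset.sum_le_sum fun j _ => hcompl j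
    · refine (Finset.sum_le_sum hcore).trans (le_of_eq ?_)
      rw [Finset.sum_const, nsmul_eq_mul, ENNReal.ofReal_mul (p := (K.card : ℝ)) (by positivity),
        ENNReal.ofReal_natCast]
  refine (ENNReal.toReal_mono ENNReal.ofReal_ne_top hmain).trans ?_
  rw [ENNReal.toReal_ofReal (by positivity)]
  calc τ + K.card * (τ * (1 / ((p : ℝ) - 1))) = (1 + (K.card : ℝ) / ((p : ℝ) - 1)) * τ := by ring
    _ ≤ (1 + (k : ℝ) / ((p : ℝ) - 1)) * (frobNorm (A - B)) ^ 2 := by gcongr
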